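/- Let z_1,...,z_M ∈ C^d be pairwise distinct, ε ∈ [0,1], and μ uniformly distributed on the complex unit sphere S_C^{d−1}. Then the probability that there exist indices i ≠ j with |⟨z_i − z_j, μ⟩| < ε‖z_i − z_j‖ is at most C(M,2) · 2√(d/π) · ε, where C(M,2) = M(M−1)/2. -/

import Mathlib

open scoped InnerProductSpace Real
open MeasureTheory

/-!
By unitary invariance, `P {μ | ‖⟪z, μ⟫‖ < ε * ‖z‖}` is the same for all `z ≠ 0`, so it equals its
average over `z` in the unit ball of `ℂ^d` with respect to Lebesgue measure. Exchanging the order of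
integration, it suffices to fix a unit vector `μ` and bound the proportion of the ball on which
`‖⟪z, μ⟫‖ < ε`. That part of the ball lies in the product of a disc of radius `ε` in `ℂ ∙ μ` and the
unit ball of the complement, and has proportion at most
`π ε² · (π^(d-1) / (d-1)!) / (π^d / d!) = d ε²`. Since a probability is also at most `1`, this gives
`2 √(d / π) ε`, and a union bound over the unordered pairs concludes.
-/

section UnitaryInvariance

variable {𝕜 E : Type*} [RCLike 𝕜] [NormedAddCommGroup E] [InnerProductSpace 𝕜 E]

theorem exists_linearIsometryEquiv_apply_eq_of_norm_eq_one [FiniteDimensional 𝕜 E] {x y : E}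
    (hx : ‖x‖ = 1) (hy : ‖y‖ = 1) : ∃ U : E ≃ₗᵢ[𝕜] E, U x = y := by
  let spanIsometry : (𝕜 ∙ x) →ₗᵢ[𝕜] E :=
    (LinearIsometry.toSpanSingleton 𝕜 E hy).comp
      (LinearIsometryEquiv.toSpanUnitSingleton x hx).symm.toLinearIsometry
  have hspan : spanIsometry ⟨x, Submodule.mem_span_singleton_self x⟩ = y := by
    have hone : (LinearIsometryEquiv.toSpanUnitSingleton (𝕜 := 𝕜) x hx).symm
        ⟨x, Submodule.mem_span_singleton_self x⟩ = 1 := by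
      rw [LinearIsometryEquiv.symm_apply_eq]
      simp
    simp [spanIsometry, hone]
  exact ⟨spanIsometry.extend.toLinearIsometryEquiv rfl,
    (spanIsometry.extend_apply ⟨x, Submodule.mem_span_singleton_self x⟩).trans hspan⟩

variable (𝕜) in
/-- The band of half-width `ε` around the hyperplane orthogonal to `z`: the vectors `x` whose inner
product with the direction of `z` has absolute value less than `ε`. The inequality is multiplied
through by `‖z‖`, so the band is empty for `z = 0`. -/
def equatorialBand (z : E) (ε : ℝ) : Set E :=
  {x | ‖⟪z, x⟫_𝕜‖ < ε * ‖z‖}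

variable (𝕜) in
theorem isOpen_setOf_mem_equatorialBand (ε : ℝ) :
    IsOpen {p : E × E | p.2 ∈ equatorialBand 𝕜 p.1 ε} :=
  isOpen_lt (f := fun p : E × E => ‖⟪p.1, p.2⟫_𝕜‖) (g := fun p => ε * ‖p.1‖)
    (by fun_prop) (by fun_prop)

variable (𝕜) in
theorem isOpen_equatorialBand (z : E) (ε : ℝ) : IsOpen (equatorialBand 𝕜 z ε) :=
  isOpen_lt (by fun_prop) (by fun_prop)

theorem equatorialBand_zero (ε : ℝ) : equatorialBand 𝕜 (0 : E) ε = ∅ := by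
  simp [equatorialBand]

theorem equatorialBand_smul {c : 𝕜} (hc : c ≠ 0) (z : E) (ε : ℝ) :
    equatorialBand 𝕜 (c • z) ε = equatorialBand 𝕜 z ε := by
  ext x
  simp only [equatorialBand, Set.mem_ofPred_eq, inner_smul_left, norm_mul, RCLike.norm_conj,
    norm_smul, mul_left_comm ε]
  exact mul_lt_mul_iff_right₀ (norm_pos_iff.2 hc)

theorem equatorialBand_sub_comm (z w : E) (ε : ℝ) :
    equatorialBand 𝕜 (z - w) ε = equatorialBand 𝕜 (w - z) ε := by
  simpa using equatorialBand_smul (𝕜 := 𝕜) (neg_ne_zero.2 one_ne_zero) (w - z) ε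

theorem preimage_equatorialBand (U : E ≃ₗᵢ[𝕜] E) (z : E) (ε : ℝ) :
    U ⁻¹' equatorialBand 𝕜 (U z) ε = equatorialBand 𝕜 z ε := by
  simp [equatorialBand]

theorem setOf_mem_equatorialBand_inter_unit_ball_subset (x : E) (ε : ℝ) :
    {y : E | x ∈ equatorialBand 𝕜 y ε} ∩ Metric.ball 0 1 ⊆
      {y : E | ‖⟪x, y⟫_𝕜‖ < ε} ∩ Metric.ball 0 1 := by
  rintro y ⟨hxy, hy⟩
  have hy1 : ‖y‖ < 1 := mem_ball_zero_iff.1 hy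
  have hlt : ‖⟪x, y⟫_𝕜‖ < ε * ‖y‖ := (norm_inner_symm x y).trans_lt hxy
  have hε : 0 < ε := pos_of_mul_pos_left ((norm_nonneg _).trans_lt hlt) (norm_nonneg y)
  exact ⟨hlt.trans_le (mul_le_of_le_one_right hε.le hy1.le), hy⟩

theorem measure_equatorialBand_eq [FiniteDimensional 𝕜 E] [MeasurableSpace E] [BorelSpace E]
    {P : Measure E} (hinv : ∀ U : E ≃ₗᵢ[𝕜] E, P.map U = P) {y z : E} (hy : y ≠ 0) (hz : z ≠ 0)
    (ε : ℝ) : P (equatorialBand 𝕜 y ε) = P (equatorialBand 𝕜 z ε) := by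
  have scalar_ne_zero {w : E} (hw : w ≠ 0) : (‖w‖⁻¹ : 𝕜) ≠ 0 := by simpa using hw
  obtain ⟨U, hU⟩ := exists_linearIsometryEquiv_apply_eq_of_norm_eq_one (𝕜 := 𝕜)
    (norm_smul_inv_norm (𝕜 := 𝕜) hy) (norm_smul_inv_norm (𝕜 := 𝕜) hz)
  calc P (equatorialBand 𝕜 y ε)
      = P (U ⁻¹' equatorialBand 𝕜 (U ((‖y‖⁻¹ : 𝕜) • y)) ε) := by
        rw [preimage_equatorialBand, equatorialBand_smul (scalar_ne_zero hy)]
    _ = P.map U (equatorialBand 𝕜 ((‖z‖⁻¹ : 𝕜) • z) ε) := by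
        rw [hU, Measure.map_apply U.continuous.measurable
          (isOpen_equatorialBand 𝕜 _ ε).measurableSet]
    _ = P (equatorialBand 𝕜 z ε) := by rw [hinv, equatorialBand_smul (scalar_ne_zero hz)]

end UnitaryInvariance

section RealVolume

variable {E : Type*} [NormedAddCommGroup E] [InnerProductSpace ℝ E] [FiniteDimensional ℝ E]
  [MeasurableSpace E] [BorelSpace E]

theorem volume_univ_of_subsingleton [Subsingleton E] : volume (Set.univ : Set E) = 1 := by
  have hne : (parallelepiped (stdOrthonormalBasis ℝ E)).Nonempty :=
    ⟨0, (mem_parallelepiped_iff _ _).2 ⟨0, by simp, by simp⟩⟩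
  rw [← (stdOrthonormalBasis ℝ E).volume_parallelepiped, Subsingleton.eq_univ_of_nonempty hne]

/-- Unlike `InnerProductSpace.volume_ball_of_dim_even`, this covers dimension zero. -/
theorem volume_ball_of_finrank_eq_two_mul {k : ℕ} (hk : Module.finrank ℝ E = 2 * k) (x : E)
    {r : ℝ} (hr : 0 < r) :
    volume (Metric.ball x r) =
      ENNReal.ofReal r ^ (2 * k) * ENNReal.ofReal (π ^ k / k.factorial) := by
  rcases subsingleton_or_nontrivial E with hE | hE
  · have hk0 : k = 0 := by simpa [Module.finrank_zero_of_subsingleton] using hk.symm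
    have hball : Metric.ball x r = Set.univ :=
      Subsingleton.eq_univ_of_nonempty ⟨x, Metric.mem_ball_self hr⟩
    simp [hk0, hball, volume_univ_of_subsingleton]
  · rw [InnerProductSpace.volume_ball_of_dim_even hk, hk]

theorem volume_setOf_norm_projection_lt_inter_ball_le (K : Submodule ℝ E) (r s : ℝ) :
    volume ({y : E | ‖K.starProjection y‖ < s} ∩ Metric.ball 0 r) ≤
      volume (Metric.ball (0 : K) s) * volume (Metric.ball (0 : Kᗮ) r) := by
  have hpreserving := (WithLp.volume_preserving_ofLp K Kᗮ).comp
    K.orthogonalDecomposition.measurePreserving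
  rw [← Measure.prod_prod, ← Measure.volume_eq_prod, ← hpreserving.measure_preimage
    (Metric.isOpen_ball.prod Metric.isOpen_ball).measurableSet.nullMeasurableSet]
  refine measure_mono fun y hy => ?_
  have hyr : ‖Kᗮ.orthogonalProjectionOnto y‖ < r :=
    (Kᗮ.norm_orthogonalProjectionOnto_apply_le y).trans_lt (mem_ball_zero_iff.1 hy.2)
  simpa using And.intro hy.1 hyr

end RealVolume

section ComplexVolume

attribute [local instance] InnerProductSpace.complexToReal

variable {E : Type*} [NormedAddCommGroup E] [InnerProductSpace ℂ E]

theorem starProjection_restrictScalars_real (K : Submodule ℂ E) [K.HasOrthogonalProjection]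
    [(K.restrictScalars ℝ).HasOrthogonalProjection] (y : E) :
    (K.restrictScalars ℝ).starProjection y = K.starProjection y :=
  Submodule.eq_starProjection_of_mem_of_inner_eq_zero (K.starProjection_apply_mem y) fun w hw => by
    rw [real_inner_eq_re_inner ℂ, K.starProjection_inner_eq_zero y w hw, map_zero]

variable [FiniteDimensional ℂ E] [MeasurableSpace E] [BorelSpace E]

theorem volume_setOf_norm_inner_lt_inter_unit_ball_le {x : E} (hx : ‖x‖ = 1) (ε : ℝ) :
    volume ({y : E | ‖⟪x, y⟫_ℂ‖ < ε} ∩ Metric.ball 0 1) ≤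
      Module.finrank ℂ E * ENNReal.ofReal ε ^ 2 * volume (Metric.ball (0 : E) 1) := by
  have hx0 : x ≠ 0 := norm_ne_zero_iff.1 (by simp [hx])
  have : Nontrivial E := ⟨x, 0, hx0⟩
  let K : Submodule ℝ E := (ℂ ∙ x).restrictScalars ℝ
  obtain ⟨n, hn⟩ := Nat.exists_eq_succ_of_ne_zero (Module.finrank_pos (R := ℂ) (M := E)).ne'
  have hE : Module.finrank ℝ E = 2 * (n + 1) := by rw [finrank_real_of_complex, hn]
  have hK : Module.finrank ℝ K = 2 * 1 :=
    (finrank_real_of_complex (ℂ ∙ x)).trans (by rw [finrank_span_singleton hx0])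
  have hKperp : Module.finrank ℝ Kᗮ = 2 * n := by
    have := K.finrank_add_finrank_orthogonal
    lia
  have : Nontrivial K := Module.nontrivial_of_finrank_pos (R := ℝ) (by lia)
  have hproj (y : E) : ‖K.starProjection y‖ = ‖⟪x, y⟫_ℂ‖ := by
    rw [starProjection_restrictScalars_real, Submodule.starProjection_unit_singleton ℂ hx,
      norm_smul, hx, mul_one]
  have hconst : π * (π ^ n / n.factorial) = (n + 1) * (π ^ (n + 1) / (n + 1).factorial) := by
    rw [Nat.factorial_succ]
    push_cast
    field_simp
    ring
  calc volume ({y : E | ‖⟪x, y⟫_ℂ‖ < ε} ∩ Metric.ball 0 1)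
      ≤ volume (Metric.ball (0 : K) ε) * volume (Metric.ball (0 : Kᗮ) 1) := by
        simpa only [hproj] using volume_setOf_norm_projection_lt_inter_ball_le K 1 ε
    _ = ENNReal.ofReal ε ^ 2 * ENNReal.ofReal (π * (π ^ n / n.factorial)) := by
        rw [InnerProductSpace.volume_ball_of_dim_even hK, hK,
          volume_ball_of_finrank_eq_two_mul hKperp 0 one_pos, ENNReal.ofReal_mul Real.pi_nonneg]
        simp [mul_assoc]
    _ = Module.finrank ℂ E * ENNReal.ofReal ε ^ 2 * volume (Metric.ball (0 : E) 1) := by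
        rw [volume_ball_of_finrank_eq_two_mul hE 0 one_pos, hconst,
          ENNReal.ofReal_mul (by positivity), hn, ← Nat.cast_succ, ENNReal.ofReal_natCast,
          ENNReal.ofReal_one, one_pow]
        ring

theorem measure_equatorialBand_le (P : Measure E) [IsProbabilityMeasure P]
    (hsphere : ∀ᵐ x ∂P, ‖x‖ = 1) (hinv : ∀ U : E ≃ₗᵢ[ℂ] E, P.map U = P) (z : E) (ε : ℝ) :
    P (equatorialBand ℂ z ε) ≤ Module.finrank ℂ E * ENNReal.ofReal ε ^ 2 := by
  rcases eq_or_ne z 0 with rfl | hz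
  · simp [equatorialBand_zero]
  have : Nontrivial E := ⟨z, 0, hz⟩
  let B : Set E := Metric.ball 0 1
  have hmeas := (isOpen_setOf_mem_equatorialBand (E := E) ℂ ε).measurableSet
  have hB_pos : volume B ≠ 0 := (Metric.measure_ball_pos volume 0 one_pos).ne'
  have hB_fin : volume B ≠ ⊤ := measure_ball_lt_top.ne
  rw [← ENNReal.mul_le_mul_iff_left hB_pos hB_fin]
  calc P (equatorialBand ℂ z ε) * volume B
      = ∫⁻ y in B, P (equatorialBand ℂ y ε) := by
        rw [← setLIntegral_const]
        refine lintegral_congr_ae (ae_restrict_of_ae ?_)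
        filter_upwards [volume.ae_ne (0 : E)] with y hy
        exact measure_equatorialBand_eq hinv hz hy ε
    _ = ∫⁻ x, volume.restrict B {y | x ∈ equatorialBand ℂ y ε} ∂P :=
        (Measure.prod_apply hmeas).symm.trans (Measure.prod_apply_symm hmeas)
    _ ≤ ∫⁻ _, Module.finrank ℂ E * ENNReal.ofReal ε ^ 2 * volume B ∂P := by
        refine lintegral_mono_ae ?_
        filter_upwards [hsphere] with x hx
        rw [Measure.restrict_apply' measurableSet_ball]
        exact (measure_mono (setOf_mem_equatorialBand_inter_unit_ball_subset x ε)).trans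
          (volume_setOf_norm_inner_lt_inter_unit_ball_le hx ε)
    _ = Module.finrank ℂ E * ENNReal.ofReal ε ^ 2 * volume B := by simp

theorem measureReal_equatorialBand_le (P : Measure E) [IsProbabilityMeasure P]
    (hsphere : ∀ᵐ x ∂P, ‖x‖ = 1) (hinv : ∀ U : E ≃ₗᵢ[ℂ] E, P.map U = P) (z : E) {ε : ℝ}
    (hε : 0 ≤ ε) :
    P.real (equatorialBand ℂ z ε) ≤ 2 * √(Module.finrank ℂ E / π) * ε := by
  set r := 2 * √(Module.finrank ℂ E / π) * ε with hr
  rcases le_or_gt 1 r with hr1 | hr1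
  · exact measureReal_le_one.trans hr1
  have hr0 : 0 ≤ r := by positivity
  have hr_sq : Module.finrank ℂ E * ε ^ 2 = π / 4 * r ^ 2 := by
    rw [hr, mul_pow, mul_pow, Real.sq_sqrt (by positivity)]
    field_simp
    norm_num
  calc P.real (equatorialBand ℂ z ε) ≤ Module.finrank ℂ E * ε ^ 2 := by
        refine ENNReal.toReal_le_of_le_ofReal (by positivity) ?_
        rw [ENNReal.ofReal_mul (by positivity), ENNReal.ofReal_natCast, ENNReal.ofReal_pow hε]
        exact measure_equatorialBand_le P hsphere hinv z ε
    _ = π / 4 * r ^ 2 := hr_sq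
    _ ≤ 1 * r := by
        gcongr
        · linarith [Real.pi_le_four]
        · nlinarith
    _ = r := one_mul r

end ComplexVolume

theorem measureReal_setOf_exists_ne_mem_le {Ω ι : Type*} [MeasurableSpace Ω] [Fintype ι]
    (P : Measure Ω) [IsFiniteMeasure P] {A : ι → ι → Set Ω} (hsymm : ∀ i j, A i j = A j i) {c : ℝ}
    (hc : ∀ i j, i ≠ j → P.real (A i j) ≤ c) :
    P.real {ω | ∃ i j, i ≠ j ∧ ω ∈ A i j} ≤ (Fintype.card ι).choose 2 * c := by
  classical
  let pairEvent : Sym2 ι → Set Ω := Sym2.lift ⟨A, hsymm⟩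
  have hcover : {ω | ∃ i j, i ≠ j ∧ ω ∈ A i j} ⊆
      ⋃ e : {e : Sym2 ι // ¬ e.IsDiag}, pairEvent e := by
    rintro ω ⟨i, j, hij, hω⟩
    exact Set.mem_iUnion.2 ⟨⟨s(i, j), hij⟩, hω⟩
  have hpair (e : {e : Sym2 ι // ¬ e.IsDiag}) : P.real (pairEvent e) ≤ c := by
    obtain ⟨⟨i, j⟩, hij⟩ := e
    exact hc i j hij
  calc P.real {ω | ∃ i j, i ≠ j ∧ ω ∈ A i j}
      ≤ P.real (⋃ e : {e : Sym2 ι // ¬ e.IsDiag}, pairEvent e) := measureReal_mono hcover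
    _ ≤ ∑ e : {e : Sym2 ι // ¬ e.IsDiag}, P.real (pairEvent e) := measureReal_iUnion_fintype_le _
    _ ≤ ∑ _ : {e : Sym2 ι // ¬ e.IsDiag}, c := Finset.sum_le_sum fun e _ => hpair e
    _ = (Fintype.card ι).choose 2 * c := by
        rw [Finset.sum_const, Finset.card_univ, Sym2.card_subtype_not_diag, nsmul_eq_mul]

theorem stmt_17_general {E ι : Type*} [NormedAddCommGroup E] [InnerProductSpace ℂ E]
    [FiniteDimensional ℂ E] [MeasurableSpace E] [BorelSpace E] [Fintype ι]
    (P : Measure E) [IsProbabilityMeasure P] (hsphere : P {x | ‖x‖ = 1} = 1)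
    (hinv : ∀ U : E ≃ₗᵢ[ℂ] E, P.map U = P) (z : ι → E) {ε : ℝ} (hε : 0 ≤ ε) :
    P.real {μ | ∃ i j, i ≠ j ∧ ‖⟪z i - z j, μ⟫_ℂ‖ < ε * ‖z i - z j‖} ≤
      (Fintype.card ι).choose 2 * (2 * √(Module.finrank ℂ E / π) * ε) := by
  have hsphere_ae : ∀ᵐ x ∂P, ‖x‖ = 1 :=
    (mem_ae_iff_prob_eq_one (measurableSet_eq_fun (by fun_prop) (by fun_prop))).2 hsphere
  exact measureReal_setOf_exists_ne_mem_le P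
    (A := fun i j => equatorialBand ℂ (z i - z j) ε)
    (fun i j => equatorialBand_sub_comm (z i) (z j) ε)
    fun i j _ => measureReal_equatorialBand_le P hsphere_ae hinv (z i - z j) hε

theorem stmt_17 (d M : ℕ)
    [MeasurableSpace (EuclideanSpace ℂ (Fin d))]
    [BorelSpace (EuclideanSpace ℂ (Fin d))]
    (P : Measure (EuclideanSpace ℂ (Fin d))) [IsProbabilityMeasure P]
    (hsphere : P {x | ‖x‖ = 1} = 1)
    (hinv : ∀ U : EuclideanSpace ℂ (Fin d) ≃ₗᵢ[ℂ] EuclideanSpace ℂ (Fin d),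
      P.map U = P)
    (z : Fin M → EuclideanSpace ℂ (Fin d)) (hz : Function.Injective z)
    (ε : ℝ) (hε : ε ∈ Set.Icc (0 : ℝ) 1) :
    (P {μ | ∃ i j : Fin M, i ≠ j ∧ ‖⟪z i - z j, μ⟫_ℂ‖ < ε * ‖z i - z j‖}).toReal ≤
      (M * (M - 1) / 2 : ℝ) * (2 * Real.sqrt (d / π)) * ε := by
  simpa [Nat.cast_choose_two, mul_assoc, Measure.real] using
    stmt_17_general P hsphere hinv z hε.1
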